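/- arXiv:1707.02418 — 3 statements merged into one kernel-verified Lean document; each statement's English description precedes it below -/
import Mathlib

section
/- Let F ⊆ ℝ × ℝ be a compact convex set and c = (c₁, c₂) ∈ ℝ × ℝ, and suppose there exists p ∈ F with c₁ < p₁ and c₂ < p₂. Then there exists a unique point q ∈ F with q₁ ≥ c₁ and q₂ ≥ c₂ that maximizes the Nash product, i.e. such that for every r ∈ F with r₁ ≥ c₁ and r₂ ≥ c₂ one has (r₁ − c₁)·(r₂ − c₂) ≤ (q₁ − c₁)·(q₂ − c₂). -/
lemma nash_aux (a b x y : ℝ) (ha : 0 ≤ a) (hb : 0 ≤ b) (hx : 0 ≤ x) (hy : 0 ≤ y)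
    (hM : 0 < a * b) (h : x * y = a * b)
    (hm : (a + x) / 2 * ((b + y) / 2) ≤ a * b) : x = a ∧ y = b := by
  have h1 : a * y + x * b ≤ 2 * (a * b) := by nlinarith
  have h0 : 0 ≤ a * y + x * b := by positivity
  have h2 : (a * y + x * b) ^ 2 ≤ (2 * (a * b)) ^ 2 := pow_le_pow_left₀ h0 h1 2
  have h3 : (a * y) * (x * b) = (a * b) * (a * b) := by
    calc (a * y) * (x * b) = (a * b) * (x * y) := by ring
      _ = _ := by rw [h]
  have h4 : (a * y - x * b) ^ 2 ≤ 0 := by nlinarith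
  have h5 : a * y - x * b = 0 := by
    have := sq_nonneg (a * y - x * b)
    exact pow_eq_zero_iff (two_ne_zero) |>.1 (le_antisymm h4 this)
  have h6 : a * y = x * b := by linarith
  have h7 : a * y = a * b := by
    rw [← h6] at h3
    exact (mul_self_inj (by positivity) (by positivity)).1 h3
  have ha' : a ≠ 0 := by rintro rfl; simp at hM
  have hb' : b ≠ 0 := by rintro rfl; simp at hM
  exact ⟨mul_right_cancel₀ hb' (by rw [← h6, h7]), mul_left_cancel₀ ha' h7⟩

/-- Existence and uniqueness of the Nash bargaining solution: for a compact convex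
feasibility set `F` containing a point strictly dominating the disagreement point `c`,
there is a unique individually rational point of `F` maximizing the Nash product. -/
theorem nash_solution_exists_unique (F : Set (ℝ × ℝ)) (hFcomp : IsCompact F)
    (hFconv : Convex ℝ F) (c : ℝ × ℝ) (hdom : ∃ p ∈ F, c.1 < p.1 ∧ c.2 < p.2) :
    ∃! q : ℝ × ℝ, q ∈ F ∧ c.1 ≤ q.1 ∧ c.2 ≤ q.2 ∧
      ∀ r ∈ F, c.1 ≤ r.1 → c.2 ≤ r.2 →
        (r.1 - c.1) * (r.2 - c.2) ≤ (q.1 - c.1) * (q.2 - c.2) := by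
  obtain ⟨p, hpF, hp1, hp2⟩ := hdom
  have hcl : IsClosed {q : ℝ × ℝ | c.1 ≤ q.1 ∧ c.2 ≤ q.2} :=
    (isClosed_le continuous_const continuous_fst).inter
      (isClosed_le continuous_const continuous_snd)
  have hcont : Continuous (fun q : ℝ × ℝ => (q.1 - c.1) * (q.2 - c.2)) := by fun_prop
  obtain ⟨q, ⟨hqF, hq1, hq2⟩, hq⟩ := (hFcomp.inter_right hcl).exists_isMaxOn
    ⟨p, hpF, hp1.le, hp2.le⟩ hcont.continuousOn
  have hmax : ∀ r ∈ F, c.1 ≤ r.1 → c.2 ≤ r.2 →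
        (r.1 - c.1) * (r.2 - c.2) ≤ (q.1 - c.1) * (q.2 - c.2) :=
    fun r hr h1 h2 => hq ⟨hr, h1, h2⟩
  refine ⟨q, ⟨hqF, hq1, hq2, hmax⟩, ?_⟩
  rintro s ⟨hsF, hs1, hs2, hs⟩
  have hpos : 0 < (q.1 - c.1) * (q.2 - c.2) :=
    lt_of_lt_of_le (mul_pos (sub_pos.2 hp1) (sub_pos.2 hp2)) (hmax p hpF hp1.le hp2.le)
  have hmid : ((1 / 2 : ℝ) • q + (1 / 2 : ℝ) • s) ∈ F :=
    hFconv hqF hsF (by norm_num) (by norm_num) (by norm_num)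
  have hm := hmax _ hmid
    (by simp only [Prod.fst_add, Prod.smul_fst, smul_eq_mul]; linarith)
    (by simp only [Prod.snd_add, Prod.smul_snd, smul_eq_mul]; linarith)
  simp only [Prod.fst_add, Prod.smul_fst, Prod.snd_add, Prod.smul_snd, smul_eq_mul] at hm
  obtain ⟨e1, e2⟩ := nash_aux (q.1 - c.1) (q.2 - c.2) (s.1 - c.1) (s.2 - c.2)
    (sub_nonneg.2 hq1) (sub_nonneg.2 hq2) (sub_nonneg.2 hs1) (sub_nonneg.2 hs2) hpos
    (le_antisymm (hmax s hsF hs1 hs2) (hs q hqF hq1 hq2))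
    (by convert hm using 1; ring)
  exact Prod.ext (by linarith) (by linarith)
end

section
/- Let F ⊆ ℝ × ℝ be a compact convex set and c = (c₁, c₂) ∈ ℝ × ℝ, and suppose there exists p ∈ F with c₁ < p₁ and c₂ < p₂. If q ∈ F with q₁ ≥ c₁ and q₂ ≥ c₂ maximizes the Nash product (i.e. (r₁ − c₁)(r₂ − c₂) ≤ (q₁ − c₁)(q₂ − c₂) for every r ∈ F with r₁ ≥ c₁ and r₂ ≥ c₂), then q is Pareto optimal in F: there is no r ∈ F with r₁ > q₁ and r₂ > q₂. -/
/-- Pareto optimality of the Nash bargaining solution: any individually rational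
point of a compact convex feasibility set `F` maximizing the Nash product (relative
to a disagreement point `c` strictly dominated by some point of `F`) is Pareto
optimal in `F`. -/
theorem nash_solution_pareto_optimal (F : Set (ℝ × ℝ)) (hFcomp : IsCompact F)
    (hFconv : Convex ℝ F) (c : ℝ × ℝ) (hdom : ∃ p ∈ F, c.1 < p.1 ∧ c.2 < p.2)
    (q : ℝ × ℝ) (hqF : q ∈ F) (hq1 : c.1 ≤ q.1) (hq2 : c.2 ≤ q.2)
    (hqmax : ∀ r ∈ F, c.1 ≤ r.1 → c.2 ≤ r.2 →
      (r.1 - c.1) * (r.2 - c.2) ≤ (q.1 - c.1) * (q.2 - c.2)) :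
    ¬ ∃ r ∈ F, q.1 < r.1 ∧ q.2 < r.2 := by
  rintro ⟨r, hrF, h1, h2⟩
  have h := hqmax r hrF (hq1.trans h1.le) (hq2.trans h2.le)
  have hlt : (q.1 - c.1) * (q.2 - c.2) < (r.1 - c.1) * (r.2 - c.2) :=
    mul_lt_mul'' (by linarith) (by linarith) (by linarith) (by linarith)
  exact absurd h (not_le.mpr hlt)
end

section
/- Define φ₁ : ℝ × ℝ → ℝ by φ₁(x, y) = (x + √(3 + x² − 3y))/3 on the open set U = {(x, y) ∈ ℝ × ℝ : 3 + x² − 3y > 0}. Then φ₁ is twice continuously differentiable on U and its Laplacian satisfies, for every (x, y) ∈ U, Δφ₁(x, y) = (1/4 − y)·(3 + x² − 3y)^{−3/2}. In particular, Δφ₁(x, y) > 0 if and only if y < 1/4, and Δφ₁(x, y) < 0 if and only if y > 1/4. (Hence, under the Nash solution for the feasibility set {(x,y) : 0 ≤ x ≤ 1, 0 ≤ y ≤ 1 − x²}, Player 1 gains in expectation from a small random perturbation of the disagreement point exactly when its second coordinate is below 1/4.) -/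
open Real

/-- The Laplacian of `φ : ℝ × ℝ → ℝ` at `p`: the sum of the second derivatives
of `φ` in the two coordinate directions at `p`. -/
noncomputable def laplacian (φ : ℝ × ℝ → ℝ) (p : ℝ × ℝ) : ℝ :=
  iteratedDeriv 2 (fun t : ℝ => φ (p.1 + t, p.2)) 0 +
  iteratedDeriv 2 (fun t : ℝ => φ (p.1, p.2 + t)) 0

theorem iteratedDeriv_two_eq_of_hasDerivAt {f g : ℝ → ℝ} {c a : ℝ}
    (h : ∀ᶠ t in nhds a, HasDerivAt f (g t) t) (hg : HasDerivAt g c a) :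
    iteratedDeriv 2 f a = c := by
  rw [iteratedDeriv_succ, iteratedDeriv_one]
  have h1 : deriv f =ᶠ[nhds a] g := h.mono fun t ht => ht.deriv
  rw [h1.deriv_eq, hg.deriv]

/-- For `φ₁(x, y) = (x + √(3 + x² − 3y))/3` on `U = {(x, y) : 3 + x² − 3y > 0}`
(the first coordinate of the Nash solution for the feasibility set
`{(x, y) : 0 ≤ x ≤ 1, 0 ≤ y ≤ 1 − x²}` as a function of the disagreement point):
`φ₁` is twice continuously differentiable on `U`, its Laplacian equals
`(1/4 − y)·(3 + x² − 3y)^(−3/2)` on `U`, and in particular it is positive iff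
`y < 1/4` and negative iff `y > 1/4`. -/
theorem nash_payoff_laplacian
    (φ₁ : ℝ × ℝ → ℝ) (hφ₁ : φ₁ = fun p : ℝ × ℝ => (p.1 + Real.sqrt (3 + p.1 ^ 2 - 3 * p.2)) / 3)
    (U : Set (ℝ × ℝ)) (hU : U = {p : ℝ × ℝ | 0 < 3 + p.1 ^ 2 - 3 * p.2}) :
    ContDiffOn ℝ 2 φ₁ U ∧
    ∀ p ∈ U,
      laplacian φ₁ p = (1 / 4 - p.2) * (3 + p.1 ^ 2 - 3 * p.2) ^ (-(3 : ℝ) / 2) ∧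
      (0 < laplacian φ₁ p ↔ p.2 < 1 / 4) ∧
      (laplacian φ₁ p < 0 ↔ 1 / 4 < p.2) := by
  subst hφ₁ hU
  refine ⟨?_, ?_⟩
  · intro p hp
    have hp' : 3 + p.1 ^ 2 - 3 * p.2 ≠ 0 := ne_of_gt hp
    apply ContDiffAt.contDiffWithinAt
    have h1 : ContDiffAt ℝ 2 (fun p : ℝ × ℝ => 3 + p.1 ^ 2 - 3 * p.2) p := by fun_prop
    exact (contDiffAt_fst.add (h1.sqrt hp')).div_const 3
  · rintro ⟨x, y⟩ hp
    have hD : 0 < 3 + x ^ 2 - 3 * y := hp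
    have hs : 0 < √(3 + x ^ 2 - 3 * y) := Real.sqrt_pos.2 hD
    have hsq : √(3 + x ^ 2 - 3 * y) ^ 2 = 3 + x ^ 2 - 3 * y := Real.sq_sqrt hD.le
    have hpow : (3 + x ^ 2 - 3 * y) ^ (-(3 : ℝ) / 2) = (√(3 + x ^ 2 - 3 * y) ^ 3)⁻¹ := by
      rw [neg_div, Real.rpow_neg hD.le, Real.sqrt_eq_rpow, ← Real.rpow_natCast _ 3,
        ← Real.rpow_mul hD.le]
      norm_num
    have hX : iteratedDeriv 2 (fun t : ℝ => ((x + t) + √(3 + (x + t) ^ 2 - 3 * y)) / 3) 0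
        = (1 - y) * (√(3 + x ^ 2 - 3 * y) ^ 3)⁻¹ := by
      have hd : ∀ t : ℝ, HasDerivAt (fun t : ℝ => 3 + (x + t) ^ 2 - 3 * y) (2 * (x + t)) t := by
        intro t
        have := ((((hasDerivAt_id t).const_add x).pow 2).const_add 3).sub_const (3 * y)
        refine HasDerivAt.congr_deriv this ?_
        simp
      have hev : ∀ᶠ t in nhds (0 : ℝ), 0 < 3 + (x + t) ^ 2 - 3 * y :=
        (hd 0).continuousAt.eventually (lt_mem_nhds (by simpa using hD))
      refine iteratedDeriv_two_eq_of_hasDerivAt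
        (g := fun t => (1 + (2 * (x + t)) / (2 * √(3 + (x + t) ^ 2 - 3 * y))) / 3) ?_ ?_
      · filter_upwards [hev] with t ht
        exact (((hasDerivAt_id t).const_add x).add ((hd t).sqrt ht.ne')).div_const 3
      · have h0 := (hd 0).sqrt (by simpa using hD.ne')
        have h2 := ((((hasDerivAt_id (0 : ℝ)).const_add x).const_mul 2).div (h0.const_mul 2)
          (by simpa using hs.ne')).const_add 1 |>.div_const 3
        refine HasDerivAt.congr_deriv h2 ?_
        simp only [add_zero, id]
        generalize √(3 + x ^ 2 - 3 * y) = s at *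
        field_simp
        rw [hsq]
        ring
    have hY : iteratedDeriv 2 (fun t : ℝ => (x + √(3 + x ^ 2 - 3 * (y + t))) / 3) 0
        = (-3 / 4) * (√(3 + x ^ 2 - 3 * y) ^ 3)⁻¹ := by
      have hd : ∀ t : ℝ, HasDerivAt (fun t : ℝ => 3 + x ^ 2 - 3 * (y + t)) (-3) t := by
        intro t
        have := (((hasDerivAt_id t).const_add y).const_mul 3).const_sub (3 + x ^ 2)
        refine HasDerivAt.congr_deriv this ?_
        simp
      have hev : ∀ᶠ t in nhds (0 : ℝ), 0 < 3 + x ^ 2 - 3 * (y + t) :=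
        (hd 0).continuousAt.eventually (lt_mem_nhds (by simpa using hD))
      refine iteratedDeriv_two_eq_of_hasDerivAt
        (g := fun t => ((-3) / (2 * √(3 + x ^ 2 - 3 * (y + t)))) / 3) ?_ ?_
      · filter_upwards [hev] with t ht
        exact (((hd t).sqrt ht.ne').const_add x).div_const 3
      · have h0 := (hd 0).sqrt (by simpa using hD.ne')
        have h2 := ((hasDerivAt_const (0 : ℝ) (-3 : ℝ)).div (h0.const_mul 2)
          (by simpa using hs.ne')).div_const 3
        refine HasDerivAt.congr_deriv h2 ?_
        simp only [add_zero]
        generalize √(3 + x ^ 2 - 3 * y) = s at *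
        field_simp
        ring
    have hL : laplacian (fun p : ℝ × ℝ => (p.1 + √(3 + p.1 ^ 2 - 3 * p.2)) / 3) (x, y)
        = (1 / 4 - y) * (3 + x ^ 2 - 3 * y) ^ (-(3 : ℝ) / 2) := by
      unfold laplacian
      simp only
      rw [hX, hY, hpow]
      ring
    have hpos : 0 < (3 + x ^ 2 - 3 * y) ^ (-(3 : ℝ) / 2) := Real.rpow_pos_of_pos hD _
    refine ⟨hL, ?_, ?_⟩
    · rw [hL, mul_pos_iff_of_pos_right hpos, sub_pos]
    · rw [hL, ← neg_pos, ← neg_mul, mul_pos_iff_of_pos_right hpos, neg_pos, sub_neg]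
end
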